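/- Let S be a Polish metric space and let P be an asymptotically stable regular Markov operator on S with invariant probability measure μ*. Suppose P has the e-property in C_b(S) at some point z in the support of μ*. Then for every bounded continuous f : S → ℝ and every ε > 0 there exist a Borel set B ⊆ S with μ*(B) > 0 and N ∈ ℕ such that |Uⁿf(x) − ∫ f dμ*| ≤ ε for all n ≥ N and all x ∈ B. -/

import Mathlib

open MeasureTheory ProbabilityTheory Filter Topology

/-- The `n`-step evolution of a measure under the Markov operator generated by the
transition kernel `κ`: `P⁰μ = μ`, `Pⁿ⁺¹μ = (Pⁿμ).bind κ`. -/
noncomputable def kIter {S : Type*} [MeasurableSpace S] (κ : ProbabilityTheory.Kernel S S) :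
    ℕ → Measure S → Measure S
  | 0, μ => μ
  | n + 1, μ => (kIter κ n μ).bind (fun x => κ x)

/-- The `n`-th iterate of the dual operator: `Uⁿf(x) = ∫ f d(Pⁿδₓ)`. -/
noncomputable def kDual {S : Type*} [MeasurableSpace S] (κ : ProbabilityTheory.Kernel S S)
    (n : ℕ) (f : S → ℝ) (x : S) : ℝ :=
  ∫ y, f y ∂(kIter κ n (Measure.dirac x))

/-- A real-valued function is bounded. -/
def IsBddFun {S : Type*} (f : S → ℝ) : Prop := ∃ C : ℝ, ∀ x, |f x| ≤ C

/-- The Feller property: the dual operator maps bounded continuous functions to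
continuous functions. -/
def IsFeller {S : Type*} [MeasurableSpace S] [TopologicalSpace S]
    (κ : ProbabilityTheory.Kernel S S) : Prop :=
  ∀ f : S → ℝ, Continuous f → IsBddFun f → Continuous (fun x => ∫ y, f y ∂(κ x))

/-- Asymptotic stability: `μst` is an invariant probability measure and `Pⁿμ → μst`
weakly for every Borel probability measure `μ`. -/
def IsAsympStable {S : Type*} [MeasurableSpace S] [TopologicalSpace S]
    (κ : ProbabilityTheory.Kernel S S) (μst : Measure S) : Prop :=
  IsProbabilityMeasure μst ∧ kIter κ 1 μst = μst ∧
    ∀ μ : Measure S, IsProbabilityMeasure μ → ∀ f : S → ℝ, Continuous f → IsBddFun f →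
      Tendsto (fun n => ∫ x, f x ∂(kIter κ n μ)) atTop (𝓝 (∫ x, f x ∂μst))

/-- The e-property in `C_b(S)` at a point `z`: for every bounded continuous `f`,
`sup_{n} |Uⁿf(x) − Uⁿf(z)| → 0` as `x → z`. -/
def EPropCbAt {S : Type*} [MeasurableSpace S] [TopologicalSpace S]
    (κ : ProbabilityTheory.Kernel S S) (z : S) : Prop :=
  ∀ f : S → ℝ, Continuous f → IsBddFun f →
    Tendsto (fun x => ⨆ n : ℕ, |kDual κ n f x - kDual κ n f z|) (𝓝 z) (𝓝 0)


/-- If an asymptotically stable regular Markov operator has the e-property in `C_b(S)` at a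
point of the support of its invariant measure `μst`, then for every bounded continuous `f`
and `ε > 0` there are a Borel set `B` of positive `μst`-measure and `N ∈ ℕ` with
`|Uⁿf(x) − ∫ f dμst| ≤ ε` for all `n ≥ N` and `x ∈ B`. -/
theorem lowerBound_set_of_eProp_at_support_point
    {S : Type*} [MetricSpace S] [CompleteSpace S] [SecondCountableTopology S]
    [MeasurableSpace S] [BorelSpace S]
    (κ : ProbabilityTheory.Kernel S S) [IsMarkovKernel κ]
    (μst : Measure S) (hstab : IsAsympStable κ μst)
    (z : S) (hz : ∀ ε > 0, 0 < μst (Metric.ball z ε)) (hEz : EPropCbAt κ z) :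
    ∀ f : S → ℝ, Continuous f → IsBddFun f → ∀ ε > (0 : ℝ),
      ∃ B : Set S, MeasurableSet B ∧ 0 < μst B ∧ ∃ N : ℕ, ∀ n ≥ N, ∀ x ∈ B,
        |kDual κ n f x - ∫ y, f y ∂μst| ≤ ε := by
  intro f hf hb ε hε
  have hconv (x : S) : Tendsto (fun n => kDual κ n f x) atTop (𝓝 (∫ y, f y ∂μst)) :=
    hstab.2.2 (Measure.dirac x) inferInstance f hf hb
  obtain ⟨r, hr, hball⟩ := Metric.eventually_nhds_iff_ball.mp
    ((hEz f hf hb).eventually_lt_const (half_pos hε))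
  obtain ⟨N, hN⟩ := Metric.tendsto_atTop.mp (hconv z) (ε / 2) (half_pos hε)
  refine ⟨Metric.ball z r, measurableSet_ball, hz r hr, N, fun n hn x hx => ?_⟩
  have hbdd : BddAbove (Set.range fun n => |kDual κ n f x - kDual κ n f z|) :=
    ((hconv x).sub (hconv z)).abs.bddAbove_range
  have hxz : |kDual κ n f x - kDual κ n f z| < ε / 2 :=
    (le_ciSup hbdd n).trans_lt (hball x hx)
  have hlim : |kDual κ n f z - ∫ y, f y ∂μst| < ε / 2 := hN n hn
  linarith [abs_sub_le (kDual κ n f x) (kDual κ n f z) (∫ y, f y ∂μst)]
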